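/- arXiv:2412.17181 — 3 statements merged into one kernel-verified Lean document; each statement's English description precedes it below -/
import Mathlib

section
/- For all integers n ≥ 1 and M ≥ 1 and every p ∈ [0,1], if S ~ Binomial(n,p) then P(S ≤ M) ≤ e·exp( −np / max(2M, 8) ). -/
/-- **Chernoff-type lower-tail bound for the binomial distribution.**  For all integers
`n ≥ 1` and `M ≥ 1` and every success probability `p ∈ [0,1]`, if `S ~ Binomial(n,p)` then
`P(S ≤ M) = ∑_{k ≤ M} C(n,k) p^k (1−p)^{n−k} ≤ e · exp(−np / max(2M, 8))`. -/
theorem binomial_lower_tail_bound (n M : ℕ) (hn : 1 ≤ n) (hM : 1 ≤ M)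
    (p : ℝ) (hp0 : 0 ≤ p) (hp1 : p ≤ 1) :
    ∑ k ∈ Finset.range (M + 1), (n.choose k : ℝ) * p ^ k * (1 - p) ^ (n - k) ≤
      Real.exp 1 * Real.exp (-((n : ℝ) * p) / max (2 * (M : ℝ)) 8) := by
  have hM' : (1 : ℝ) ≤ M := by exact_mod_cast hM
  have hM0 : (0 : ℝ) < M := by linarith
  have hq : 0 ≤ 1 - p := by linarith
  obtain ⟨x, hx⟩ : ∃ x, x = Real.exp (-(1 / (M : ℝ))) := ⟨_, rfl⟩
  have hx0 : 0 < x := hx ▸ Real.exp_pos _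
  have hpow : ∀ k : ℕ, k ≤ M → 1 ≤ Real.exp 1 * x ^ k := by
    intro k hk
    rw [hx, ← Real.exp_nat_mul, ← Real.exp_add]
    apply Real.one_le_exp
    have hk' : (k : ℝ) ≤ M := by exact_mod_cast hk
    have h1 : (k : ℝ) / M ≤ 1 := (div_le_one hM0).2 hk'
    have h2 : (k : ℝ) * -(1 / (M : ℝ)) = -((k : ℝ) / M) := by ring
    rw [h2]
    linarith
  have hx1 : x ≤ 1 - 1 / max (2 * (M : ℝ)) 8 := by
    have h1 : 1 / (M : ℝ) + 1 ≤ Real.exp (1 / (M : ℝ)) := Real.add_one_le_exp _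
    have h2 : x ≤ 1 / (1 / (M : ℝ) + 1) := by
      rw [hx, Real.exp_neg, ← one_div]
      exact one_div_le_one_div_of_le (by positivity) h1
    have h3 : 1 / (1 / (M : ℝ) + 1) = 1 - 1 / (M + 1) := by
      field_simp
      ring
    have h4 : 1 / max (2 * (M : ℝ)) 8 ≤ 1 / ((M : ℝ) + 1) :=
      one_div_le_one_div_of_le (by positivity) (le_trans (by linarith) (le_max_left _ _))
    linarith
  have hterm : ∀ k : ℕ, 0 ≤ (x * p) ^ k * (1 - p) ^ (n - k) * (n.choose k : ℝ) := by
    intro k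
    positivity
  calc ∑ k ∈ Finset.range (M + 1), (n.choose k : ℝ) * p ^ k * (1 - p) ^ (n - k)
      ≤ ∑ k ∈ Finset.range (M + 1),
          Real.exp 1 * ((x * p) ^ k * (1 - p) ^ (n - k) * (n.choose k : ℝ)) := by
        apply Finset.sum_le_sum
        intro k hk
        have h := hpow k (by have := Finset.mem_range.1 hk; omega)
        have h0 : 0 ≤ (n.choose k : ℝ) * p ^ k * (1 - p) ^ (n - k) := by positivity
        have h1 := mul_le_mul_of_nonneg_right h h0
        rw [mul_pow]
        linarith
    _ ≤ ∑ k ∈ Finset.range (n + 1),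
          Real.exp 1 * ((x * p) ^ k * (1 - p) ^ (n - k) * (n.choose k : ℝ)) := by
        rw [Finset.sum_subset (Finset.subset_union_right (s₁ := Finset.range (M + 1))
          (s₂ := Finset.range (n + 1)))]
        · apply Finset.sum_le_sum_of_subset_of_nonneg Finset.subset_union_left
          intro k _ _
          exact mul_nonneg (Real.exp_pos 1).le (hterm k)
        · intro k _ hk
          rw [Finset.mem_range] at hk
          rw [Nat.choose_eq_zero_of_lt (by omega)]
          simp
    _ = Real.exp 1 * (x * p + (1 - p)) ^ n := by
        rw [← Finset.mul_sum, add_pow]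
    _ ≤ Real.exp 1 * Real.exp (-((n : ℝ) * p) / max (2 * (M : ℝ)) 8) := by
        apply mul_le_mul_of_nonneg_left _ (Real.exp_pos 1).le
        have h1 : x * p + (1 - p) ≤ Real.exp (-p * (1 / max (2 * (M : ℝ)) 8)) := by
          have h2 := Real.add_one_le_exp (-p * (1 / max (2 * (M : ℝ)) 8))
          have h3 := mul_le_mul_of_nonneg_right hx1 hp0
          linarith
        have h2 := pow_le_pow_left₀ (by positivity) h1 n
        rw [← Real.exp_nat_mul] at h2
        refine h2.trans (le_of_eq ?_)
        congr 1
        ring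
end

section
/- Let m ∈ ℕ and let Q be a probability measure on ℝ^m that is absolutely continuous with respect to Lebesgue measure with density bounded above by g_max < ∞. Then there exists a constant C > 0, depending only on m and g_max, such that for all β ≥ 1, all x ∈ ℝ^m and all r ≥ 0, ∫_{ℝ^m ∖ B(x,r)} exp(−β·‖x−y‖^m) Q(dy) ≤ (C/β)·exp(−β·r^m/2). -/
open MeasureTheory
open scoped ENNReal

/-- Integrability of the model kernel. -/
lemma integrable_kernel_aux (m : ℕ) (hm : 0 < m) :
    Integrable (fun z : EuclideanSpace ℝ (Fin m) => Real.exp (-(1 / 2) * ‖z‖ ^ m)) := by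
  have : Nonempty (Fin m) := ⟨⟨0, hm⟩⟩
  have key := (integrable_fun_norm_addHaar (E := EuclideanSpace ℝ (Fin m)) volume
    (f := fun t : ℝ => Real.exp (-(1 / 2) * t ^ m))).2
  apply key
  have h := integrableOn_rpow_mul_exp_neg_mul_rpow (p := (m : ℝ)) (s := ((m - 1 : ℕ) : ℝ))
    (b := 1 / 2) (by have : (0 : ℝ) ≤ ((m - 1 : ℕ) : ℝ) := Nat.cast_nonneg _
                     linarith) (by exact_mod_cast hm) (by norm_num)
  simpa only [Real.rpow_natCast, finrank_euclideanSpace, Fintype.card_fin, smul_eq_mul] using h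

/-- **Lemma (integral of an exponentially decaying kernel outside a ball).**  Let `Q` be a
probability measure on `ℝ^m` that is absolutely continuous with respect to Lebesgue measure
with density bounded above by `g_max < ∞`.  Then there is a constant `C > 0`, depending
only on `m` and `g_max`, such that for all `β ≥ 1`, all `x ∈ ℝ^m` and all `r ≥ 0`,
`∫_{ℝ^m ∖ B(x,r)} exp(−β ‖x−y‖^m) Q(dy) ≤ (C/β) exp(−β r^m / 2)`. -/
theorem integral_exp_decay_outside_ball (m : ℕ) (gmax : ℝ) (hgmax : 0 ≤ gmax) :
    ∃ C : ℝ, 0 < C ∧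
      ∀ (f : EuclideanSpace ℝ (Fin m) → ℝ≥0∞), (∀ x, f x ≤ ENNReal.ofReal gmax) →
      ∀ Q : Measure (EuclideanSpace ℝ (Fin m)), IsProbabilityMeasure Q →
        Q = MeasureTheory.volume.withDensity f →
        ∀ β : ℝ, 1 ≤ β → ∀ x : EuclideanSpace ℝ (Fin m), ∀ r : ℝ, 0 ≤ r →
          ∫ y in (Metric.closedBall x r)ᶜ, Real.exp (-β * ‖x - y‖ ^ m) ∂Q ≤
            C / β * Real.exp (-β * r ^ m / 2) := by
  rcases Nat.eq_zero_or_pos m with hm | hm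
  · subst hm
    refine ⟨1, one_pos, ?_⟩
    intro f _ Q _ _ β hβ x r hr
    have : (Metric.closedBall x r)ᶜ = (∅ : Set (EuclideanSpace ℝ (Fin 0))) := by
      ext y
      simp [Subsingleton.elim y x, hr]
    rw [this]
    simp only [Measure.restrict_empty, integral_zero_measure]
    positivity
  set k : EuclideanSpace ℝ (Fin m) → ℝ := fun z => Real.exp (-(1 / 2) * ‖z‖ ^ m) with hk
  have hkint : Integrable k := integrable_kernel_aux m hm
  have hI : 0 ≤ ∫ z, k z := integral_nonneg fun z => (Real.exp_pos _).le
  refine ⟨gmax * (∫ z, k z) + 1, by positivity, ?_⟩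
  intro f hf Q hQ hQf β hβ x r hr
  have hβ0 : 0 < β := by linarith
  have hQle : Q ≤ ENNReal.ofReal gmax • (volume : Measure (EuclideanSpace ℝ (Fin m))) := by
    rw [hQf, ← withDensity_const]
    exact withDensity_mono (Filter.Eventually.of_forall hf)
  set R : ℝ := β ^ ((m : ℝ)⁻¹) with hR
  have hR0 : 0 < R := Real.rpow_pos_of_pos hβ0 _
  have hRm : R ^ m = β := Real.rpow_inv_natCast_pow hβ0.le hm.ne'
  have hscale : ∀ z : EuclideanSpace ℝ (Fin m),
      k (R • z) = Real.exp (-β * ‖z‖ ^ m / 2) := by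
    intro z
    simp only [hk, norm_smul, Real.norm_eq_abs, abs_of_pos hR0, mul_pow, hRm]
    congr 1
    ring
  have hkR : Integrable (fun z => k (R • z)) := hkint.comp_smul hR0.ne'
  have hkRx : Integrable (fun y => k (R • (x - y))) := hkR.comp_sub_left x
  have hval : ∫ y, k (R • (x - y)) = β⁻¹ * ∫ z, k z := by
    rw [integral_sub_left_eq_self (fun z => k (R • z)) volume x, Measure.integral_comp_smul]
    simp [hRm, abs_of_pos hβ0]
  have hkQ : Integrable (fun y => k (R • (x - y))) Q :=
    hkRx.of_measure_le_smul ENNReal.ofReal_ne_top hQle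
  have hQval : ∫ y, k (R • (x - y)) ∂Q ≤ gmax * (β⁻¹ * ∫ z, k z) := by
    calc ∫ y, k (R • (x - y)) ∂Q
        ≤ ∫ y, k (R • (x - y)) ∂(ENNReal.ofReal gmax • volume) :=
          integral_mono_measure hQle (Filter.Eventually.of_forall fun y => (Real.exp_pos _).le)
            (hkRx.smul_measure ENNReal.ofReal_ne_top)
      _ = gmax * (β⁻¹ * ∫ z, k z) := by
          rw [integral_smul_measure, hval, ENNReal.toReal_ofReal hgmax, smul_eq_mul]
  have hmeas : MeasurableSet (Metric.closedBall x r)ᶜ := Metric.isClosed_closedBall.measurableSet.compl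
  calc ∫ y in (Metric.closedBall x r)ᶜ, Real.exp (-β * ‖x - y‖ ^ m) ∂Q
      ≤ ∫ y in (Metric.closedBall x r)ᶜ, Real.exp (-β * r ^ m / 2) * k (R • (x - y)) ∂Q := by
        refine integral_mono_of_nonneg (Filter.Eventually.of_forall fun y => (Real.exp_pos _).le)
          (hkQ.const_mul _).integrableOn ?_
        filter_upwards [ae_restrict_mem hmeas] with y hy
        have hy' : r ≤ ‖x - y‖ := by
          have : r < dist y x := by simpa using hy
          rw [dist_comm, dist_eq_norm] at this
          exact this.le
        have hp : r ^ m ≤ ‖x - y‖ ^ m := pow_le_pow_left₀ hr hy' m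
        rw [hscale, ← Real.exp_add]
        apply Real.exp_le_exp.2
        nlinarith [mul_le_mul_of_nonneg_left hp hβ0.le]
    _ ≤ ∫ y, Real.exp (-β * r ^ m / 2) * k (R • (x - y)) ∂Q :=
        setIntegral_le_integral (hkQ.const_mul _)
          (Filter.Eventually.of_forall fun y => mul_nonneg (Real.exp_pos _).le (Real.exp_pos _).le)
    _ = Real.exp (-β * r ^ m / 2) * ∫ y, k (R • (x - y)) ∂Q := integral_const_mul _ _
    _ ≤ Real.exp (-β * r ^ m / 2) * ((gmax * (∫ z, k z) + 1) / β) := by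
        refine mul_le_mul_of_nonneg_left (hQval.trans ?_) (Real.exp_pos _).le
        rw [div_eq_mul_inv]
        have : 0 ≤ β⁻¹ := by positivity
        nlinarith
    _ = (gmax * (∫ z, k z) + 1) / β * Real.exp (-β * r ^ m / 2) := mul_comm _ _
end

section
/- Let Z be a standard normal random variable. For every a > 0, the Kolmogorov distance between aZ and Z satisfies sup_{t∈ℝ} |P(aZ ≤ t) − P(Z ≤ t)| ≤ max(a, a⁻¹) − 1. -/
open ProbabilityTheory

lemma gsk_cdf (t : ℝ) : ((gaussianReal 0 1) (Set.Iic t)).toReal =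
    ∫ x in Set.Iic t, gaussianPDFReal 0 1 x := by
  rw [gaussianReal_apply_eq_integral 0 one_ne_zero, ENNReal.toReal_ofReal]
  exact MeasureTheory.integral_nonneg fun x => gaussianPDFReal_nonneg 0 1 x

lemma gsk_pdf_bound (u : ℝ) : gaussianPDFReal 0 1 u * |u| ≤ 1 := by
  have h1 : (1 : ℝ) ≤ √(2 * Real.pi) := by
    rw [Real.one_le_sqrt]; linarith [Real.pi_gt_three]
  have h2 : (√(2 * Real.pi))⁻¹ ≤ 1 := inv_le_one_of_one_le₀ h1
  have h3 : |u| ≤ Real.exp (u ^ 2 / 2) := by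
    have := Real.add_one_le_exp (u ^ 2 / 2)
    nlinarith [sq_nonneg (|u| - 1), sq_abs u]
  have h4 : Real.exp (-(u ^ 2 / 2)) * |u| ≤ 1 := by
    rw [Real.exp_neg, inv_mul_le_iff₀ (Real.exp_pos _)]; simpa using h3
  have h5 : gaussianPDFReal 0 1 u = (√(2 * Real.pi))⁻¹ * Real.exp (-(u ^ 2 / 2)) := by
    simp [gaussianPDFReal, neg_div]
  rw [h5, mul_assoc]
  exact mul_le_one₀ h2 (by positivity) h4

lemma gsk_key (u c : ℝ) (hc : 1 ≤ c) :
    |((gaussianReal 0 1) (Set.Iic (c * u))).toReal -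
      ((gaussianReal 0 1) (Set.Iic u)).toReal| ≤ c - 1 := by
  rw [gsk_cdf, gsk_cdf, intervalIntegral.integral_Iic_sub_Iic
    (integrable_gaussianPDFReal 0 1).integrableOn (integrable_gaussianPDFReal 0 1).integrableOn]
  have h : ∀ y ∈ Set.uIoc u (c * u), ‖gaussianPDFReal 0 1 y‖ ≤ gaussianPDFReal 0 1 u := by
    intro y hy
    rw [Real.norm_of_nonneg (gaussianPDFReal_nonneg 0 1 y)]
    have hsq : u ^ 2 ≤ y ^ 2 := by
      rw [Set.mem_uIoc] at hy
      rcases le_total 0 u with hu | hu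
      · rcases hy with hy | hy
        · nlinarith
        · nlinarith
      · rcases hy with hy | hy
        · nlinarith
        · nlinarith
    simp only [gaussianPDFReal, sub_zero]
    gcongr
  have h' := intervalIntegral.norm_integral_le_of_norm_le_const h
  rw [Real.norm_eq_abs] at h'
  refine h'.trans ?_
  rw [show c * u - u = (c - 1) * u by ring, abs_mul, abs_of_nonneg (by linarith : 0 ≤ c - 1)]
  nlinarith [gsk_pdf_bound u]

/-- **Kolmogorov distance between a scaled standard Gaussian and a standard Gaussian.**
For `Z ~ N(0,1)` and every `a > 0`, `sup_t |P(aZ ≤ t) − P(Z ≤ t)|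
= sup_t |Φ(t/a) − Φ(t)| ≤ max(a, a⁻¹) − 1`. -/
theorem gaussian_scaling_kolmogorov_bound (a : ℝ) (ha : 0 < a) :
    (⨆ t : ℝ,
        |((gaussianReal 0 1) (Set.Iic (t / a))).toReal -
          ((gaussianReal 0 1) (Set.Iic t)).toReal|) ≤ max a a⁻¹ - 1 := by
  refine ciSup_le fun t => ?_
  rcases le_total 1 a with h | h
  · have := gsk_key (t / a) a h
    rw [mul_div_cancel₀ t ha.ne', abs_sub_comm] at this
    linarith [le_max_left a a⁻¹]
  · have := gsk_key t a⁻¹ ((one_le_inv₀ ha).2 h)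
    rw [inv_mul_eq_div] at this
    linarith [le_max_right a a⁻¹]
end
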